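/- For every λ ∈ ℝ one has the explicit evaluation [[C_{λ,λ+3}, C_{λ,λ}]](X,Y)(f) = (X‴Y′ − X′Y‴)f′ + (X″Y′ − X′Y″)f″, the identity [[C_{λ,λ+3}, C_{λ,λ}]] = −[[C_{λ+3,λ+3}, C_{λ,λ+3}]], and this bilinear map is a 2-cocycle on Vect(1) with values in D_{λ,λ+3}. -/

import Mathlib

noncomputable section

/-- Polynomials over ℝ, identified with polynomial vector fields / densities on the line. -/
abbrev P : Type := Polynomial ℝ

/-- Derivative d/dx. -/
def D : P → P := fun f => Polynomial.derivative f

/-- Iterated derivative: `Dk k f = f^(k)`. -/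
def Dk (k : ℕ) : P → P := D^[k]

/-- Lie bracket on Vect(1): [X,Y] = XY' - X'Y. -/
def br (X Y : P) : P := X * D Y - D X * Y

/-- Action of the vector field X on λ-densities: `L_X^λ f = X f' + λ X' f`. -/
def Lw (l : ℝ) (X f : P) : P := X * D f + Polynomial.C l * D X * f

/-- Action on operators from F_ν to F_μ: `L_X^{ν,μ}(A) = L_X^μ ∘ A - A ∘ L_X^ν`. -/
def LD (nu mu : ℝ) (X : P) (A : P → P) (f : P) : P := Lw mu X (A f) - A (Lw nu X f)

/-- 1-cocycle condition with values in D_{ν,μ}. -/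
def IsCocycle1 (nu mu : ℝ) (c : P → P → P) : Prop :=
  ∀ X Y f, c (br X Y) f = LD nu mu X (c Y) f - LD nu mu Y (c X) f

/-- 2-cocycle condition with values in D_{ν,μ}. -/
def IsCocycle2 (nu mu : ℝ) (o : P → P → P → P) : Prop :=
  ∀ X Y Z f,
    LD nu mu X (o Y Z) f - LD nu mu Y (o X Z) f + LD nu mu Z (o X Y) f
      - o (br X Y) Z f + o (br X Z) Y f - o (br Y Z) X f = 0

/-- Cup product of 1-cochains: `[[C₁,C₂]](X,Y) = C₁(X)∘C₂(Y) - C₁(Y)∘C₂(X)`. -/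
def cup (c₁ c₂ : P → P → P) (X Y f : P) : P := c₁ X (c₂ Y f) - c₁ Y (c₂ X f)

/-- Coboundary of a 1-cochain b with values in D_{ν,μ}. -/
def cob (nu mu : ℝ) (b : P → P → P) (X Y f : P) : P :=
  LD nu mu X (b Y) f - LD nu mu Y (b X) f - b (br X Y) f

/-!
Since `X‴f′ + X″f″ = (X″f′)′`, the cochain `C_{λ,λ+3}(X)` is the composition `∂ ∘ X″ ∘ ∂`, where
`X ↦ X″` is a 1-cocycle with values in the 1-densities. The derivative fails to be equivariant by
`L_X(∂) = -λX″` on `λ`-densities, so `L_X(∂ ∘ Y″ ∘ ∂)` differs from `∂ ∘ L_X(Y″) ∘ ∂` by terms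
containing `X″Y″`. These are symmetric in `X` and `Y`, hence drop out of the cocycle condition, and
`C_{λ,λ+3}` is a 1-cocycle for every `λ`. By the Leibniz rule for `L_X` on compositions, its cup
product with the 1-cocycle `C_{λ,λ}` is a 2-cocycle. Similarly, the commutator of `∂ ∘ X″ ∘ ∂` with
multiplication by `Y′` is symmetric in `X` and `Y`, so exchanging the two factors of the cup product
changes its sign.
-/

/-- The 1-cochain `C_{λ,λ}`, which multiplies a density by the divergence `X′`. -/
def divCochain (X f : P) : P := D X * f

/-- The 1-cochain `C_{λ,λ+3}`, raising the weight of a density by three. -/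
def shiftThreeCochain (X f : P) : P := Dk 3 X * D f + Dk 2 X * Dk 2 f

section Derivative

lemma D_add (f g : P) : D (f + g) = D f + D g := Polynomial.derivative_add

lemma D_sub (f g : P) : D (f - g) = D f - D g := Polynomial.derivative_sub

lemma D_mul (f g : P) : D (f * g) = D f * g + f * D g := Polynomial.derivative_mul

lemma D_C_mul (r : ℝ) (f : P) : D (Polynomial.C r * f) = Polynomial.C r * D f :=
  Polynomial.derivative_C_mul r f

lemma D_br (X Y : P) : D (br X Y) = X * D (D Y) - Y * D (D X) := by
  simp only [br, D_sub, D_mul]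
  ring

lemma D_D_br (X Y : P) : D (D (br X Y)) = Lw 1 X (D (D Y)) - Lw 1 Y (D (D X)) := by
  simp only [D_br, D_sub, D_mul, Lw, Polynomial.C_1]
  ring

end Derivative

section Operators

variable (l m n : ℝ) (X : P)

lemma Lw_sub (f g : P) : Lw l X (f - g) = Lw l X f - Lw l X g := by
  simp only [Lw, D_sub]
  ring

lemma Lw_mul (k : ℝ) (a f : P) : Lw (l + k) X (a * f) = Lw k X a * f + a * Lw l X f := by
  simp only [Lw, D_mul, Polynomial.C_add]
  ring

lemma LD_sub (A B : P → P) (f : P) :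
    LD l n X (fun g => A g - B g) f = LD l n X A f - LD l n X B f := by
  simp only [LD, Lw_sub]
  ring

lemma LD_comp {A : P → P} (hA : ∀ g h, A (g - h) = A g - A h) (B : P → P) (f : P) :
    LD l n X (fun g => A (B g)) f = LD m n X A (B f) + A (LD l m X B f) := by
  simp only [LD, hA]
  ring

lemma LD_mul_left (k : ℝ) (a f : P) : LD l (l + k) X (fun g => a * g) f = Lw k X a * f := by
  simp only [LD, Lw_mul]
  ring

lemma LD_D (f : P) : LD l (l + 1) X D f = -(Polynomial.C l * (D (D X) * f)) := by
  simp only [LD, Lw, mul_assoc (Polynomial.C l), D_add, D_C_mul]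
  simp only [D_mul, Polynomial.C_add, Polynomial.C_1]
  ring

end Operators

section OneCocycles

lemma isCocycle1_mul_left (l k : ℝ) {γ : P → P}
    (hγ : ∀ X Y, γ (br X Y) = Lw k X (γ Y) - Lw k Y (γ X)) :
    IsCocycle1 l (l + k) (fun X f => γ X * f) := by
  intro X Y f
  simp only [LD_mul_left, hγ, sub_mul]

lemma isCocycle1_divCochain (l : ℝ) : IsCocycle1 l l divCochain := by
  have hD (X Y : P) : D (br X Y) = Lw 0 X (D Y) - Lw 0 Y (D X) := by
    simp only [D_br, Lw, Polynomial.C_0, zero_mul, add_zero]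
  have h_mul := isCocycle1_mul_left l 0 hD
  rwa [add_zero] at h_mul

lemma shiftThreeCochain_eq (X f : P) : shiftThreeCochain X f = D (D (D X) * D f) :=
  (D_mul _ _).symm

lemma shiftThreeCochain_sub (X f g : P) :
    shiftThreeCochain X (f - g) = shiftThreeCochain X f - shiftThreeCochain X g := by
  simp only [shiftThreeCochain_eq, D_sub, mul_sub]

lemma LD_shiftThreeCochain (l : ℝ) (X Y f : P) :
    LD l (l + 1 + 1 + 1) X (shiftThreeCochain Y) f =
      D (Lw 1 X (D (D Y)) * D f) - Polynomial.C (l + 1 + 1) * (D (D X) * D (D Y) * D f)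
        - Polynomial.C l * D (D (D X) * D (D Y) * f) := by
  have h_comp : shiftThreeCochain Y = fun f => D (D (D Y) * D f) :=
    funext (shiftThreeCochain_eq Y)
  have h_middle : LD l (l + 1 + 1) X (fun g => D (D Y) * D g) f =
      Lw 1 X (D (D Y)) * D f - Polynomial.C l * (D (D X) * D (D Y) * f) := by
    rw [LD_comp l (l + 1) (l + 1 + 1) X (mul_sub (D (D Y))), LD_mul_left, LD_D]
    ring
  rw [h_comp, LD_comp l (l + 1 + 1) (l + 1 + 1 + 1) X D_sub (fun g => D (D Y) * D g), h_middle,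
    LD_D, D_sub, D_C_mul]
  ring

lemma isCocycle1_shiftThreeCochain (l : ℝ) : IsCocycle1 l (l + 3) shiftThreeCochain := by
  intro X Y f
  have h_weight : l + 3 = l + 1 + 1 + 1 := by ring
  rw [h_weight, LD_shiftThreeCochain, LD_shiftThreeCochain, shiftThreeCochain_eq, D_D_br, sub_mul,
    D_sub, mul_comm (D (D Y)) (D (D X))]
  ring

end OneCocycles

section CupProduct

variable {c₁ c₂ : P → P → P}

lemma LD_cup (l m n : ℝ) (hc₁ : ∀ X f g, c₁ X (f - g) = c₁ X f - c₁ X g) (X Y Z f : P) :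
    LD l n X (cup c₁ c₂ Y Z) f =
      LD m n X (c₁ Y) (c₂ Z f) + c₁ Y (LD l m X (c₂ Z) f)
        - (LD m n X (c₁ Z) (c₂ Y f) + c₁ Z (LD l m X (c₂ Y) f)) := by
  rw [← LD_comp l m n X (hc₁ Y), ← LD_comp l m n X (hc₁ Z), ← LD_sub]
  rfl

lemma IsCocycle1.isCocycle2_cup {l m n : ℝ} (h₁ : IsCocycle1 m n c₁) (h₂ : IsCocycle1 l m c₂)
    (hc₁ : ∀ X f g, c₁ X (f - g) = c₁ X f - c₁ X g) :
    IsCocycle2 l n (cup c₁ c₂) := by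
  intro X Y Z f
  have h_br (U V W : P) : cup c₁ c₂ (br U V) W f =
      LD m n U (c₁ V) (c₂ W f) - LD m n V (c₁ U) (c₂ W f)
        - (c₁ W (LD l m U (c₂ V) f) - c₁ W (LD l m V (c₂ U) f)) := by
    rw [cup, h₁, h₂, hc₁]
  simp only [LD_cup l m n hc₁, h_br]
  ring

lemma cup_eq_neg_cup_of_commutator_symm {X Y f : P}
    (h : c₁ X (c₂ Y f) - c₂ Y (c₁ X f) = c₁ Y (c₂ X f) - c₂ X (c₁ Y f)) :
    cup c₁ c₂ X Y f = -cup c₂ c₁ X Y f := by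
  simp only [cup]
  linear_combination h

lemma commutator_shiftThreeCochain_divCochain (X Y f : P) :
    shiftThreeCochain X (divCochain Y f) - divCochain Y (shiftThreeCochain X f) =
      D (D X) * D (D Y) * D f + D (D (D X) * D (D Y) * f) := by
  simp only [shiftThreeCochain_eq, divCochain, D_mul, D_add]
  ring

lemma cup_shiftThreeCochain_divCochain_eq_neg (X Y f : P) :
    cup shiftThreeCochain divCochain X Y f = -cup divCochain shiftThreeCochain X Y f := by
  apply cup_eq_neg_cup_of_commutator_symm
  simp only [commutator_shiftThreeCochain_divCochain, mul_comm (D (D Y)) (D (D X))]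

lemma cup_shiftThreeCochain_divCochain (X Y f : P) :
    cup shiftThreeCochain divCochain X Y f =
      (Dk 3 X * D Y - D X * Dk 3 Y) * D f + (Dk 2 X * D Y - D X * Dk 2 Y) * Dk 2 f := by
  rw [cup_shiftThreeCochain_divCochain_eq_neg]
  simp only [cup, divCochain, shiftThreeCochain]
  ring

end CupProduct

/-- evaluation of `[[C_{λ,λ+3},C_{λ,λ}]]`, the identity
`[[C_{λ,λ+3},C_{λ,λ}]] = -[[C_{λ+3,λ+3},C_{λ,λ+3}]]`, and the 2-cocycle property. -/
theorem Om3_two_cocycle (l : ℝ) :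
    (∀ X Y f : P,
      cup (fun X f => Dk 3 X * D f + Dk 2 X * Dk 2 f) (fun X f => D X * f) X Y f
        = (Dk 3 X * D Y - D X * Dk 3 Y) * D f
          + (Dk 2 X * D Y - D X * Dk 2 Y) * Dk 2 f) ∧
    (∀ X Y f : P,
      cup (fun X f => Dk 3 X * D f + Dk 2 X * Dk 2 f) (fun X f => D X * f) X Y f
        = - cup (fun X f => D X * f)
            (fun X f => Dk 3 X * D f + Dk 2 X * Dk 2 f) X Y f) ∧
    IsCocycle2 l (l + 3)
      (cup (fun X f => Dk 3 X * D f + Dk 2 X * Dk 2 f) (fun X f => D X * f)) :=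
  ⟨cup_shiftThreeCochain_divCochain, cup_shiftThreeCochain_divCochain_eq_neg,
    (isCocycle1_shiftThreeCochain l).isCocycle2_cup (isCocycle1_divCochain l) shiftThreeCochain_sub⟩
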